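/- Fix an integer r ≥ 2. For every positive integer m and every function E : ℕ → (0,1), there exists a number S with the following property: if G is an r-graph with n ≥ S vertices, then there exist an equipartition A = {V_i : 1 ≤ i ≤ k} of the vertex set of G and an equipartition B = {V_{i,j} : 1 ≤ i ≤ k, 1 ≤ j ≤ ℓ} refining A (each V_i partitioned into the ℓ sets V_{i,1}, …, V_{i,ℓ}) satisfying: (1) k ≥ m and kℓ ≤ S; (2) for all pairs 1 ≤ i < i' ≤ k but at most E(0)·k(k−1)/2 of them, the pair (V_i, V_{i'}) is E(0)-regular; (3) for all 1 ≤ i < i' ≤ k, all but at most E(k)·ℓ² of the pairs (V_{i,j}, V_{i',j'}) with 1 ≤ j, j' ≤ ℓ are E(k)-regular; (4) for all pairs 1 ≤ i < i' ≤ k but at most E(0)·k(k−1)/2 of them, the following holds: for all pairs (j, j') with 1 ≤ j, j' ≤ ℓ but at most E(0)·ℓ² of them, |d_ρ(V_i, V_{i'}) − d_ρ(V_{i,j}, V_{i',j'})| < E(0) for every color ρ ∈ {1,…,r}. -/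

import Mathlib

/-!
The proof is the energy increment argument, run twice, with all partitions kept equitable.

Partitions are labellings `f : V → α`. The energy of `f` is the sum over colours and ordered pairs
`(x, y)` of the squared density between the cells of `x` and `y`; it is at most `r n ^ 2`, and for a
refinement `h` of `f` the difference of energies is the squared `L²` distance of the two density
functions (`energy_sub`, Pythagoras for conditional expectations).

*Increment.* If more than `γ k ^ 2` pairs of cells of `f` are irregular, then by Cauchy–Schwarz any
partition refining `f` and the sets witnessing irregularity has energy larger by `γ ^ 5 n ^ 2 / 4`
(`exists_witness_labelling`). An equitable refinement of `f` into sufficiently many cells respects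
the witnessing sets up to few vertices (`exists_equi_split`), hence retains half of this gain
(`exists_increment`). Since the energy is bounded, iterating (`exists_good_refinement`) gives a
bounded equitable `γ`-regular refinement of any equitable partition.

*Outer iteration.* Call `f` with `k` cells good if it is `E 0 / 4`-regular and has a bounded
equitable refinement `h` that is `E k / (k + 1) ^ 2`-regular with energy gain at most
`(E 0) ^ 4 n ^ 2 / 16`. A partition that is not good has a bounded equitable refinement of larger
energy: the increment step if it is not `E 0 / 4`-regular, and its `E k / (k + 1) ^ 2`-regular
refinement otherwise. So `exists_good_refinement` applies again and yields a good `f`. The small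
energy gain from `f` to `h` gives closeness of densities by Chebyshev (`card_far_le`), and the
factor `(k + 1) ^ 2` turns the global count of irregular pairs of `h` into a count for each pair of
cells of `f`.
-/

open Finset
open scoped Classical

/-- The `ρ`-density `d_ρ(A,B) = e_ρ(A,B)/(|A||B|)` of a pair of (disjoint) vertex sets in
an `r`-graph with edge-coloring `c`. -/
noncomputable def mdensity {V : Type*} [DecidableEq V] {r : ℕ} (c : Sym2 V → Fin r)
    (ρ : Fin r) (A B : Finset V) : ℝ :=
  (((A ×ˢ B).filter fun p => c s(p.1, p.2) = ρ).card : ℝ) / ((A.card : ℝ) * (B.card : ℝ))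

/-- A pair `(A,B)` is `γ`-regular in an `r`-graph: for all sufficiently large subpairs,
every color density is within `γ` of the corresponding density of `(A,B)`. -/
def MRegular {V : Type*} [DecidableEq V] {r : ℕ} (c : Sym2 V → Fin r) (γ : ℝ)
    (A B : Finset V) : Prop :=
  ∀ A' ⊆ A, ∀ B' ⊆ B, γ * A.card ≤ A'.card → γ * B.card ≤ B'.card →
    ∀ ρ : Fin r, |mdensity c ρ A' B' - mdensity c ρ A B| ≤ γ

/-- `P` is an equipartition of `S`: pairwise disjoint parts covering `S`, with any two
part sizes differing by at most 1. -/
def IsEquipartition {V : Type*} [DecidableEq V] {ι : Type*} [Fintype ι]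
    (S : Finset V) (P : ι → Finset V) : Prop :=
  (∀ i j : ι, i ≠ j → Disjoint (P i) (P j)) ∧
  Finset.univ.biUnion P = S ∧
  ∀ i j : ι, (P i).card ≤ (P j).card + 1

/-! ### Labellings and equitable splittings -/

/-- The cell of label `a` in the partition of `V` given by a labelling `f`.  Partitions are
encoded throughout by labellings; empty cells are allowed. -/
noncomputable def cell {V α : Type} [Fintype V] (f : V → α) (a : α) : Finset V :=
  univ.filter fun v => f v = a

lemma mem_cell {V α : Type} [Fintype V] {f : V → α} {a : α} {v : V} :
    v ∈ cell f a ↔ f v = a := by simp [cell]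

/-- The labelling `f` is equitable: with `n` vertices and `k` labels, every cell has
`⌊n/k⌋` or `⌊n/k⌋ + 1` elements. -/
def Equi {V α : Type} [Fintype V] [Fintype α] (f : V → α) : Prop :=
  ∀ a, Fintype.card V / Fintype.card α ≤ (cell f a).card ∧
    (cell f a).card ≤ Fintype.card V / Fintype.card α + 1

/-- `h` refines `f`, every cell of `f` being made of the same number `ℓ` of cells of `h`. -/
def EqRefines {V α β : Type} [Fintype β] (f : V → α) (h : V → β) : Prop :=
  ∃ (π : β → α) (ℓ : ℕ), (∀ v, π (h v) = f v) ∧ ∀ a, (univ.filter fun b => π b = a).card = ℓ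

lemma EqRefines.refl {V α : Type} [Fintype α] (f : V → α) : EqRefines f f :=
  ⟨id, 1, fun _ => rfl, fun a => by
    rw [card_eq_one]; exact ⟨a, by ext; simp⟩⟩

lemma EqRefines.trans {V α β γ : Type} [Fintype β] [Fintype γ] {f : V → α} {g : V → β}
    {h : V → γ} (h₁ : EqRefines f g) (h₂ : EqRefines g h) : EqRefines f h := by
  obtain ⟨π, ℓ, hπ, hℓ⟩ := h₁
  obtain ⟨τ, p, hτ, hp⟩ := h₂
  refine ⟨fun c => π (τ c), ℓ * p, fun v => by simp only [hτ, hπ], fun a => ?_⟩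
  rw [card_eq_sum_card_fiberwise (f := τ) (t := univ.filter fun b => π b = a)
    (fun c hc => by simpa using hc), ← hℓ a, ← smul_eq_mul, ← sum_const]
  refine sum_congr rfl fun b hb => ?_
  rw [← hp b]
  congr 1
  ext c
  simp only [mem_filter, mem_univ, true_and] at hb ⊢
  constructor
  · exact fun h => h.2
  · rintro rfl; exact ⟨hb, rfl⟩

lemma card_eq_mul_of_fibers {α β : Type} [Fintype α] [Fintype β] {π : β → α} {ℓ : ℕ}
    (hℓ : ∀ a, (univ.filter fun b => π b = a).card = ℓ) :
    Fintype.card β = Fintype.card α * ℓ := by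
  rw [← card_univ, card_eq_sum_card_fiberwise (f := π) (t := univ) (fun _ _ => by simp)]
  simp [hℓ]

lemma Equi.half_le {V α : Type} [Fintype V] [Fintype α] {f : V → α} (hf : Equi f)
    (hn : Fintype.card α ≤ Fintype.card V) (a : α) :
    (Fintype.card V : ℝ) / (2 * Fintype.card α) ≤ (cell f a).card := by
  have hk : 0 < Fintype.card α := Fintype.card_pos_iff.2 ⟨a⟩
  have h1 := (hf a).1
  have h2 : 1 ≤ Fintype.card V / Fintype.card α := (Nat.one_le_div_iff hk).2 hn
  have h3 := Nat.div_add_mod (Fintype.card V) (Fintype.card α)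
  have h4 := Nat.mod_lt (Fintype.card V) hk
  have h5 : Fintype.card V ≤ (cell f a).card * (2 * Fintype.card α) := by nlinarith
  rw [div_le_iff₀ (by positivity)]
  exact_mod_cast h5

/-- A set `X` coloured by `s` can be cut into `ℓ` pieces of size `m` or `m + 1` such that all but
`m` elements of each colour class lie in monochromatic pieces. -/
lemma exists_split_set {V σ : Type} [DecidableEq V] [Fintype σ] (X : Finset V) (s : V → σ)
    (m ℓ : ℕ) (hm : 0 < m) (hℓ : 0 < ℓ) (h₁ : m * ℓ ≤ X.card) (h₂ : X.card ≤ (m + 1) * ℓ) :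
    ∃ g : V → Fin ℓ, (∀ j, m ≤ (X.filter fun x => g x = j).card ∧
        (X.filter fun x => g x = j).card ≤ m + 1) ∧
      (X.filter fun x => ∃ y ∈ X, g y = g x ∧ s y ≠ s x).card ≤ Fintype.card σ * m := by
  obtain ⟨b, hb⟩ := Nat.exists_eq_add_of_le h₁
  have hbl : b ≤ ℓ := by nlinarith
  obtain ⟨a, rfl⟩ := Nat.exists_eq_add_of_le hbl
  have hcard : a * m + b * (m + 1) = X.card := by rw [hb]; ring
  set P : Finpartition X := Finpartition.ofSetSetoid (Setoid.ker s) X with hP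
  set Q := P.equitabilise hcard with hQ
  have hQc : Q.parts.card = b + a := by
    rw [hQ, P.card_parts_equitabilise hcard hm.ne', add_comm]
  let e : Q.parts ≃ Fin (b + a) := Q.parts.equivFin.trans (finCongr hQc)
  let g : V → Fin (b + a) := fun x =>
    if hx : x ∈ X then e ⟨Q.part x, Q.part_mem.2 hx⟩ else ⟨0, hℓ⟩
  have hg : ∀ x ∈ X, ∀ t (ht : t ∈ Q.parts), g x = e ⟨t, ht⟩ ↔ x ∈ t := by
    intro x hx t ht
    simp only [g, hx, dif_pos, EmbeddingLike.apply_eq_iff_eq, Subtype.mk.injEq]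
    exact Q.part_eq_iff_mem ht
  refine ⟨g, fun j => ?_, ?_⟩
  · obtain ⟨⟨t, ht⟩, rfl⟩ := e.surjective j
    have : (X.filter fun x => g x = e ⟨t, ht⟩) = t := by
      ext x
      simp only [mem_filter]
      constructor
      · rintro ⟨hx, h⟩; exact (hg x hx t ht).1 h
      · intro h; exact ⟨Q.subset ht h, (hg x (Q.subset ht h) t ht).2 h⟩
    rw [this]
    rcases Finpartition.card_eq_of_mem_parts_equitabilise ht with h | h <;> omega
  · have hsub : (X.filter fun x => ∃ y ∈ X, g y = g x ∧ s y ≠ s x) ⊆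
        P.parts.biUnion fun t => t \ (Q.parts.filter fun u => u ⊆ t).biUnion id := by
      intro x hx
      obtain ⟨hx, y, hy, hyx, hne⟩ := mem_filter.1 hx
      refine mem_biUnion.2 ⟨P.part x, P.part_mem.2 hx, mem_sdiff.2
        ⟨P.mem_part_self.2 hx, fun h => hne ?_⟩⟩
      obtain ⟨u, hu, hxu⟩ := mem_biUnion.1 h
      obtain ⟨hu, hux⟩ := mem_filter.1 hu
      have hyu : y ∈ u := (hg y hy u hu).1 (hyx.trans ((hg x hx u hu).2 hxu))
      have := hux hyu
      rw [hP, Finpartition.mem_part_ofSetSetoid_iff_rel] at this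
      exact (this.2.2 : s x = s y).symm
    have hparts : P.parts.card ≤ Fintype.card σ := by
      have : P.parts ⊆ (univ : Finset σ).image fun i => X.filter fun x => i = s x := by
        intro t ht
        simp only [hP, Finpartition.ofSetSetoid_parts, mem_image] at ht
        obtain ⟨a, ha, rfl⟩ := ht
        refine mem_image.2 ⟨s a, mem_univ _, ?_⟩
        ext x
        simp
      exact (card_le_card this).trans card_image_le
    calc _ ≤ _ := card_le_card hsub
      _ ≤ ∑ t ∈ P.parts, (t \ (Q.parts.filter fun u => u ⊆ t).biUnion id).card := card_biUnion_le
      _ ≤ ∑ t ∈ P.parts, m := sum_le_sum fun t ht => by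
          have := P.card_parts_equitabilise_subset_le (h := hcard) ht
          convert this
      _ ≤ _ := by rw [sum_const, smul_eq_mul]; gcongr

/-- Every equitable labelling can be split equitably, each cell into `ℓ` cells, so that only few
vertices (the factor is `|σ| / ℓ`) share their new cell with a vertex of a different `s`-value. -/
lemma exists_equi_split {V α σ : Type} [Fintype V] [DecidableEq V] [Fintype α] [Fintype σ]
    (f : V → α) (hf : Equi f) (s : V → σ) (ℓ : ℕ) (hℓ : 0 < ℓ)
    (hn : Fintype.card α * ℓ ≤ Fintype.card V) :
    ∃ g : V → Fin ℓ, Equi (fun v => (f v, g v)) ∧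
      (univ.filter fun x => ∃ y, f y = f x ∧ g y = g x ∧ s y ≠ s x).card * ℓ ≤
        Fintype.card σ * Fintype.card V := by
  rcases isEmpty_or_nonempty α with hα | hα
  · have hV : IsEmpty V := ⟨fun v => hα.elim (f v)⟩
    exact ⟨fun v => hV.elim v, fun a => hα.elim a.1, by simp⟩
  set n := Fintype.card V
  set k := Fintype.card α
  have hk : 0 < k := Fintype.card_pos
  set m := n / k / ℓ with hm
  have hm0 : 0 < m := by
    rw [hm, Nat.div_div_eq_div_mul]
    exact Nat.div_pos hn (by positivity)
  have h1 : m * ℓ ≤ n / k := Nat.div_mul_le_self _ _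
  have h2 : n / k < (m + 1) * ℓ := by
    rw [mul_comm]; exact Nat.lt_mul_div_succ _ hℓ
  have key := fun a => exists_split_set (cell f a) s m ℓ hm0 hℓ (h1.trans (hf a).1)
    ((hf a).2.trans h2)
  choose g hg hbad using key
  refine ⟨fun v => g (f v) v, fun ⟨a, j⟩ => ?_, ?_⟩
  · have : cell (fun v => (f v, g (f v) v)) (a, j) = (cell f a).filter fun x => g a x = j := by
      ext v
      simp only [mem_cell, mem_filter, Prod.mk.injEq]
      constructor
      · rintro ⟨rfl, h⟩; exact ⟨rfl, h⟩
      · rintro ⟨rfl, h⟩; exact ⟨rfl, h⟩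
    rw [this, Fintype.card_prod, Fintype.card_fin, ← Nat.div_div_eq_div_mul]
    exact hg a j
  · have hsub : (univ.filter fun x => ∃ y, f y = f x ∧ g (f y) y = g (f x) x ∧ s y ≠ s x) ⊆
        univ.biUnion fun a => (cell f a).filter fun x => ∃ y ∈ cell f a, g a y = g a x ∧
          s y ≠ s x := by
      intro x hx
      obtain ⟨-, y, hy, hyx, hne⟩ := mem_filter.1 hx
      refine mem_biUnion.2 ⟨f x, mem_univ _, mem_filter.2 ⟨mem_cell.2 rfl, y, mem_cell.2 hy, ?_,
        hne⟩⟩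
      rw [← hyx, hy]
    have h3 : (univ.filter fun x => ∃ y, f y = f x ∧ g (f y) y = g (f x) x ∧ s y ≠ s x).card ≤
        k * (Fintype.card σ * m) := by
      refine (card_le_card hsub).trans (card_biUnion_le.trans ?_)
      refine (sum_le_sum fun a _ => hbad a).trans ?_
      simp [k]
    calc _ ≤ k * (Fintype.card σ * m) * ℓ := Nat.mul_le_mul_right _ h3
      _ = Fintype.card σ * (k * (m * ℓ)) := by ring
      _ ≤ Fintype.card σ * n := by
          gcongr
          exact (Nat.mul_le_mul_left _ h1).trans (Nat.mul_div_le _ _)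

/-! ### Averaging over the cells of a partition -/

/-- The average of `F` over the cell `{ω | h ω = t}`. -/
noncomputable def avg {Ω τ : Type} [Fintype Ω] (h : Ω → τ) (F : Ω → ℝ) (t : τ) : ℝ :=
  (∑ ω with h ω = t, F ω) / ((univ.filter fun ω => h ω = t).card : ℝ)

/-- `avg h F` is the conditional expectation of `F`: against functions that are constant on the
cells, it integrates like `F`. -/
lemma sum_mul_avg {Ω τ : Type} [Fintype Ω] [Fintype τ] (h : Ω → τ) (F : Ω → ℝ) (g : τ → ℝ) :
    ∑ ω, g (h ω) * avg h F (h ω) = ∑ ω, g (h ω) * F ω := by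
  rw [← sum_fiberwise univ h, ← sum_fiberwise univ h (fun ω => g (h ω) * F ω)]
  refine sum_congr rfl fun t _ => ?_
  have h1 : ∑ ω with h ω = t, g (h ω) * avg h F (h ω) = ∑ ω with h ω = t, g t * avg h F t :=
    sum_congr rfl fun ω hω => by rw [(mem_filter.1 hω).2]
  have h2 : ∑ ω with h ω = t, g (h ω) * F ω = ∑ ω with h ω = t, g t * F ω :=
    sum_congr rfl fun ω hω => by rw [(mem_filter.1 hω).2]
  rw [h1, h2, sum_const, nsmul_eq_mul, ← mul_sum]
  rcases (univ.filter fun ω => h ω = t).eq_empty_or_nonempty with h0 | h0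
  · simp [h0]
  · have : ((univ.filter fun ω => h ω = t).card : ℝ) ≠ 0 := by
      exact_mod_cast (card_pos.2 h0).ne'
    unfold avg
    field_simp

/-- Pythagoras for a partition and a refinement. -/
lemma sum_sq_avg_sub {Ω τ τ' : Type} [Fintype Ω] [Fintype τ] [Fintype τ'] (h : Ω → τ)
    (h' : Ω → τ') (π : τ' → τ) (hπ : ∀ ω, π (h' ω) = h ω) (F : Ω → ℝ) :
    ∑ ω, (avg h' F (h' ω) - avg h F (h ω)) ^ 2 =
      ∑ ω, avg h' F (h' ω) ^ 2 - ∑ ω, avg h F (h ω) ^ 2 := by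
  have h1 := sum_mul_avg h' F (fun t => avg h F (π t))
  have h2 := sum_mul_avg h F (avg h F)
  simp only [hπ] at h1
  have h3 : ∑ ω, (avg h' F (h' ω) - avg h F (h ω)) ^ 2 = ∑ ω, avg h' F (h' ω) ^ 2
      - 2 * ∑ ω, avg h F (h ω) * avg h' F (h' ω) + ∑ ω, avg h F (h ω) * avg h F (h ω) := by
    rw [mul_sum, ← sum_sub_distrib, ← sum_add_distrib]
    exact sum_congr rfl fun ω _ => by ring
  have h4 : ∑ ω, avg h F (h ω) ^ 2 = ∑ ω, avg h F (h ω) * avg h F (h ω) :=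
    sum_congr rfl fun ω _ => by ring
  rw [h3, h4, h1, h2]
  ring

/-- Cauchy–Schwarz on a union `T` of cells of `h`: if the average `p` of `F` over `T` is away from
a constant `d`, then `avg h F` is away from `d` in mean square on `T`. -/
lemma le_sum_sq_avg_sub {Ω τ : Type} [Fintype Ω] [Fintype τ] (h : Ω → τ) (F : Ω → ℝ)
    (Z : τ → Prop) (T : Finset Ω) (hT : ∀ ω, ω ∈ T ↔ Z (h ω)) (d p : ℝ)
    (hp : ∑ ω ∈ T, F ω = T.card * p) :
    T.card * (p - d) ^ 2 ≤ ∑ ω ∈ T, (avg h F (h ω) - d) ^ 2 := by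
  have h1 := sum_mul_avg h F (fun t => if Z t then 1 else 0)
  have hT' : T = univ.filter fun ω => Z (h ω) := by ext; simp [hT]
  have h2 : ∑ ω ∈ T, avg h F (h ω) = T.card * p := by
    rw [← hp, hT', sum_filter, sum_filter]
    simpa using h1
  have h3 : ∑ ω ∈ T, (avg h F (h ω) - d) = T.card * (p - d) := by
    rw [sum_sub_distrib, h2, sum_const, nsmul_eq_mul]; ring
  have h4 := sq_sum_le_card_mul_sum_sq (s := T) (f := fun ω => avg h F (h ω) - d)
  rw [h3] at h4
  rcases T.eq_empty_or_nonempty with rfl | h0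
  · simp
  · have : (0 : ℝ) < T.card := by exact_mod_cast card_pos.2 h0
    refine le_of_mul_le_mul_left ?_ this
    linarith [h4, (by ring : ((T.card : ℝ) * (p - d)) ^ 2 = T.card * (T.card * (p - d) ^ 2))]

/-! ### Densities and energy -/

/-- The indicator of colour `ρ` on ordered pairs of vertices (the diagonal included). -/
noncomputable def ind {V : Type} {r : ℕ} (c : Sym2 V → Fin r) (ρ : Fin r) (ω : V × V) : ℝ :=
  if c s(ω.1, ω.2) = ρ then 1 else 0

/-- The cdensity of colour `ρ` between the cells of `f` labelled by `t`. -/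
noncomputable def cdens {V α : Type} [Fintype V] [DecidableEq V] {r : ℕ} (c : Sym2 V → Fin r)
    (ρ : Fin r) (f : V → α) (t : α × α) : ℝ :=
  mdensity c ρ (cell f t.1) (cell f t.2)

/-- The energy of a labelling: the sum over all colours and all ordered pairs of vertices of the
squared cdensity between the cells of the two vertices.  It is not normalised, so it lies between
`0` and `r * |V| ^ 2`. -/
noncomputable def energy {V α : Type} [Fintype V] [DecidableEq V] {r : ℕ} (c : Sym2 V → Fin r)
    (f : V → α) : ℝ :=
  ∑ ρ, ∑ ω : V × V, cdens c ρ f (Prod.map f f ω) ^ 2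

lemma sum_ind {V : Type} [DecidableEq V] {r : ℕ} (c : Sym2 V → Fin r) (ρ : Fin r)
    (A B : Finset V) :
    ∑ ω ∈ A ×ˢ B, ind c ρ ω = (A ×ˢ B).card * mdensity c ρ A B := by
  have h1 : ∑ ω ∈ A ×ˢ B, ind c ρ ω = ((A ×ˢ B).filter fun p => c s(p.1, p.2) = ρ).card := by
    simp [ind]
  rw [h1, mdensity, card_product]
  rcases (A ×ˢ B).eq_empty_or_nonempty with h0 | h0
  · simp [h0]
  · have h2 : ((A.card * B.card : ℕ) : ℝ) ≠ 0 := by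
      rw [← card_product]; exact_mod_cast (card_pos.2 h0).ne'
    rw [Nat.cast_mul] at h2 ⊢
    rw [mul_div_cancel₀ _ h2]

lemma filter_map_eq {V α : Type} [Fintype V] [DecidableEq V] (f : V → α) (t : α × α)
    [DecidablePred fun ω : V × V => Prod.map f f ω = t] :
    (univ.filter fun ω : V × V => Prod.map f f ω = t) = cell f t.1 ×ˢ cell f t.2 := by
  ext ω
  simp [mem_cell, Prod.ext_iff]

lemma cdens_eq_avg {V α : Type} [Fintype V] [DecidableEq V] {r : ℕ} (c : Sym2 V → Fin r)
    (ρ : Fin r) (f : V → α) (t : α × α) :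
    cdens c ρ f t = avg (Prod.map f f) (ind c ρ) t := by
  rw [avg, filter_map_eq, sum_ind, cdens]
  rcases (cell f t.1 ×ˢ cell f t.2).eq_empty_or_nonempty with h0 | h0
  · have : (cell f t.1).card * (cell f t.2).card = 0 := by rw [← card_product, h0]; rfl
    have h' : ((cell f t.1).card : ℝ) * (cell f t.2).card = 0 := by exact_mod_cast this
    simp [h0, mdensity, h']
  · rw [mul_div_cancel_left₀]
    exact_mod_cast (card_pos.2 h0).ne'

lemma cdens_nonneg {V α : Type} [Fintype V] [DecidableEq V] {r : ℕ} (c : Sym2 V → Fin r)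
    (ρ : Fin r) (f : V → α) (t : α × α) : 0 ≤ cdens c ρ f t := by
  unfold cdens mdensity; positivity

lemma cdens_le_one {V α : Type} [Fintype V] [DecidableEq V] {r : ℕ} (c : Sym2 V → Fin r)
    (ρ : Fin r) (f : V → α) (t : α × α) : cdens c ρ f t ≤ 1 := by
  unfold cdens mdensity
  refine div_le_one_of_le₀ ?_ (by positivity)
  rw [← Nat.cast_mul, ← card_product]
  exact_mod_cast card_filter_le _ _

lemma energy_nonneg {V α : Type} [Fintype V] [DecidableEq V] {r : ℕ} (c : Sym2 V → Fin r)
    (f : V → α) : 0 ≤ energy c f := by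
  unfold energy; positivity

lemma energy_le {V α : Type} [Fintype V] [DecidableEq V] {r : ℕ} (c : Sym2 V → Fin r)
    (f : V → α) : energy c f ≤ r * (Fintype.card V : ℝ) ^ 2 := by
  calc energy c f ≤ ∑ _ρ : Fin r, ∑ _ω : V × V, (1 : ℝ) :=
        sum_le_sum fun ρ _ => sum_le_sum fun ω _ =>
          pow_le_one₀ (cdens_nonneg ..) (cdens_le_one ..)
    _ = _ := by simp [pow_two]

lemma energy_sub {V α β : Type} [Fintype V] [DecidableEq V] [Fintype α] [Fintype β] {r : ℕ}
    (c : Sym2 V → Fin r) (f : V → α) (h : V → β) (π : β → α) (hπ : ∀ v, π (h v) = f v) :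
    energy c h - energy c f = ∑ ρ, ∑ ω : V × V,
      (cdens c ρ h (Prod.map h h ω) - cdens c ρ f (Prod.map f f ω)) ^ 2 := by
  unfold energy
  rw [← sum_sub_distrib]
  refine sum_congr rfl fun ρ _ => ?_
  simp only [cdens_eq_avg]
  exact (sum_sq_avg_sub (Prod.map f f) (Prod.map h h) (Prod.map π π)
    (fun ω => by simp [Prod.map, hπ]) (ind c ρ)).symm

/-- If the cells of `h` and of `h'` around `x` agree except for `x` in a set `U`,
then the energy of `h'` exceeds that of `h` by at most `2 r |U| |V|`. -/
lemma energy_le_add {V α β : Type} [Fintype V] [DecidableEq V] {r : ℕ}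
    (c : Sym2 V → Fin r) (h : V → α) (h' : V → β) (U : Finset V)
    (hU : ∀ x, x ∉ U → cell h' (h' x) = cell h (h x)) :
    energy c h' ≤ energy c h + 2 * r * U.card * Fintype.card V := by
  have key : ∀ ρ, ∀ ω : V × V, cdens c ρ h' (Prod.map h' h' ω) ^ 2 ≤
      cdens c ρ h (Prod.map h h ω) ^ 2 + ((if ω.1 ∈ U then 1 else 0) + if ω.2 ∈ U then 1 else 0) := by
    rintro ρ ⟨x, y⟩
    by_cases hxy : x ∉ U ∧ y ∉ U
    · have : cdens c ρ h' (Prod.map h' h' (x, y)) = cdens c ρ h (Prod.map h h (x, y)) := by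
        simp only [cdens, Prod.map, hU x hxy.1, hU y hxy.2]
      simp only [this, hxy.1, hxy.2, if_false, add_zero, le_refl]
    · have h1 : cdens c ρ h' (Prod.map h' h' (x, y)) ^ 2 ≤ 1 :=
        pow_le_one₀ (cdens_nonneg ..) (cdens_le_one ..)
      have h2 : (1 : ℝ) ≤ (if x ∈ U then 1 else 0) + if y ∈ U then 1 else 0 := by
        rw [not_and_or, not_not, not_not] at hxy
        split_ifs <;> simp_all
      linarith [sq_nonneg (cdens c ρ h (Prod.map h h (x, y)))]
  calc energy c h' ≤ ∑ ρ, ∑ ω : V × V, (cdens c ρ h (Prod.map h h ω) ^ 2 +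
        ((if ω.1 ∈ U then 1 else 0) + if ω.2 ∈ U then 1 else 0)) :=
        sum_le_sum fun ρ _ => sum_le_sum fun ω _ => key ρ ω
    _ = _ := by
      have h1 : ∑ ω : V × V, (if ω.1 ∈ U then (1 : ℝ) else 0) = U.card * Fintype.card V := by
        rw [Fintype.sum_prod_type_right]; simp [mul_comm]
      have h2 : ∑ ω : V × V, (if ω.2 ∈ U then (1 : ℝ) else 0) = U.card * Fintype.card V := by
        rw [Fintype.sum_prod_type]; simp [mul_comm]
      simp only [sum_add_distrib, h1, h2, energy]
      simp
      ring

/-! ### The energy increment -/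

/-- The ordered pairs of labels, diagonal included, whose cells do not form a `γ`-regular pair. -/
noncomputable def irr {V α : Type} [Fintype V] [DecidableEq V] [Fintype α] {r : ℕ}
    (c : Sym2 V → Fin r) (γ : ℝ) (f : V → α) : Finset (α × α) :=
  univ.filter fun t => ¬ MRegular c γ (cell f t.1) (cell f t.2)

/-- The partition given by `f` is `γ`-regular: at most `γ k ^ 2` of the ordered pairs of its `k`
cells are irregular. -/
def Reg {V α : Type} [Fintype V] [DecidableEq V] [Fintype α] {r : ℕ}
    (c : Sym2 V → Fin r) (γ : ℝ) (f : V → α) : Prop :=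
  ((irr c γ f).card : ℝ) ≤ γ * (Fintype.card α : ℝ) ^ 2

/-- If an equitable partition is not `γ`-regular, then recording for each vertex which of the sets
witnessing irregularity it belongs to (the datum `s`) increases the energy by a fixed proportion
of `|V| ^ 2`, for every partition `h` refining both `f` and `s`. -/
lemma exists_witness_labelling {V α : Type} [Fintype V] [DecidableEq V] [Fintype α] {r : ℕ}
    (c : Sym2 V → Fin r) (γ : ℝ) (hγ : 0 < γ) (f : V → α) (hf : Equi f)
    (hn : Fintype.card α ≤ Fintype.card V) (hreg : ¬ Reg c γ f) :
    ∃ s : V → (α × α → Bool × Bool), ∀ (β : Type) [Fintype β] (h : V → β) (π : β → α)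
      (π' : β → (α × α → Bool × Bool)), (∀ v, π (h v) = f v) → (∀ v, π' (h v) = s v) →
      energy c f + γ ^ 5 / 4 * (Fintype.card V : ℝ) ^ 2 ≤ energy c h := by
  have hw : ∀ t ∈ irr c γ f, ∃ A' ⊆ cell f t.1, ∃ B' ⊆ cell f t.2,
      γ * (cell f t.1).card ≤ A'.card ∧ γ * (cell f t.2).card ≤ B'.card ∧
      ∃ ρ, γ < |mdensity c ρ A' B' - cdens c ρ f t| := by
    intro t ht
    have := (mem_filter.1 ht).2
    unfold MRegular at this
    push Not at this
    obtain ⟨A', hA, B', hB, h1, h2, ρ, h3⟩ := this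
    exact ⟨A', hA, B', hB, h1, h2, ρ, h3⟩
  choose A' hA B' hB hA' hB' ρ hρ using hw
  refine ⟨fun x t => if ht : t ∈ irr c γ f then (decide (x ∈ A' t ht), decide (x ∈ B' t ht))
    else (false, false), ?_⟩
  intro β _ h π π' hπ hπ'
  set n : ℝ := (Fintype.card V : ℝ)
  set k : ℝ := (Fintype.card α : ℝ)
  set D : Fin r → V × V → ℝ := fun ρ ω =>
    (cdens c ρ h (Prod.map h h ω) - cdens c ρ f (Prod.map f f ω)) ^ 2 with hD
  have hsub : energy c h - energy c f = ∑ ρ, ∑ ω, D ρ ω := energy_sub c f h π hπ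
  have hk0 : 0 < k := by
    by_contra hk
    have hk' : (Fintype.card α : ℝ) = 0 := le_antisymm (not_lt.1 hk) (by positivity)
    have hα : IsEmpty α := Fintype.card_eq_zero_iff.1 (by exact_mod_cast hk')
    apply hreg
    unfold Reg
    rw [Finset.eq_empty_of_isEmpty (irr c γ f)]
    simp only [card_empty, Nat.cast_zero]
    positivity
  have hn0 : 0 ≤ n := by positivity
  -- each irregular pair contributes at least `γ ^ 4` times the number of vertex pairs in it
  have hcell : ∀ t ∈ irr c γ f, γ ^ 4 * (n / (2 * k)) ^ 2 ≤
      ∑ ω with Prod.map f f ω = t, ∑ ρ, D ρ ω := by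
    intro t ht
    set T := A' t ht ×ˢ B' t ht with hT
    have hTsub : ∀ ω ∈ T, Prod.map f f ω = t := by
      intro ω hω
      obtain ⟨h1, h2⟩ := mem_product.1 hω
      have h3 : f ω.1 = t.1 := mem_cell.1 (hA t ht h1)
      have h4 : f ω.2 = t.2 := mem_cell.1 (hB t ht h2)
      exact Prod.ext h3 h4
    have h1 := le_sum_sq_avg_sub (Prod.map h h) (ind c (ρ t ht))
      (fun q => (π' q.1 t).1 = true ∧ (π' q.2 t).2 = true) T
      (fun ω => by simp [hT, hπ', ht]) (cdens c (ρ t ht) f t)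
      (mdensity c (ρ t ht) (A' t ht) (B' t ht)) (sum_ind ..)
    have h2 : ∑ ω ∈ T, (avg (Prod.map h h) (ind c (ρ t ht)) (Prod.map h h ω) -
        cdens c (ρ t ht) f t) ^ 2 = ∑ ω ∈ T, D (ρ t ht) ω :=
      sum_congr rfl fun ω hω => by rw [hD]; simp only [hTsub ω hω, cdens_eq_avg c _ h]
    have hDn : ∀ ρ ω, 0 ≤ D ρ ω := fun ρ ω => sq_nonneg _
    have h3 : ∑ ω ∈ T, D (ρ t ht) ω ≤ ∑ ω with Prod.map f f ω = t, ∑ ρ, D ρ ω := by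
      refine (sum_le_sum fun ω _ => single_le_sum (fun ρ _ => hDn ρ ω) (mem_univ (ρ t ht))).trans ?_
      exact sum_le_sum_of_subset_of_nonneg (fun ω hω => mem_filter.2 ⟨mem_univ _, hTsub ω hω⟩)
        fun ω _ _ => sum_nonneg fun ρ _ => hDn ρ ω
    have h4 : γ ^ 2 ≤ (mdensity c (ρ t ht) (A' t ht) (B' t ht) - cdens c (ρ t ht) f t) ^ 2 := by
      rw [← sq_abs (mdensity _ _ _ _ - _)]
      exact pow_le_pow_left₀ hγ.le (hρ t ht).le 2
    have h5 : (γ * (n / (2 * k))) * (γ * (n / (2 * k))) ≤ (T.card : ℝ) := by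
      rw [hT, card_product, Nat.cast_mul]
      refine mul_le_mul ?_ ?_ (by positivity) (by positivity)
      · exact (mul_le_mul_of_nonneg_left (hf.half_le hn _) hγ.le).trans (hA' t ht)
      · exact (mul_le_mul_of_nonneg_left (hf.half_le hn _) hγ.le).trans (hB' t ht)
    calc γ ^ 4 * (n / (2 * k)) ^ 2 = (γ * (n / (2 * k))) * (γ * (n / (2 * k))) * γ ^ 2 := by ring
      _ ≤ _ := mul_le_mul h5 h4 (by positivity) (by positivity)
      _ ≤ _ := h1
      _ ≤ _ := h2 ▸ h3
  have hsum : ((irr c γ f).card : ℝ) * (γ ^ 4 * (n / (2 * k)) ^ 2) ≤ ∑ ρ, ∑ ω, D ρ ω := by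
    rw [sum_comm, ← sum_fiberwise univ (Prod.map f f), ← nsmul_eq_mul, ← sum_const]
    refine (sum_le_sum hcell).trans ?_
    exact sum_le_sum_of_subset_of_nonneg (subset_univ _) fun t _ _ =>
      sum_nonneg fun ω _ => sum_nonneg fun ρ _ => sq_nonneg _
  have hirr : γ * k ^ 2 ≤ (irr c γ f).card := (not_le.1 hreg).le
  have h6 : γ * k ^ 2 * (γ ^ 4 * (n / (2 * k)) ^ 2) ≤
      ((irr c γ f).card : ℝ) * (γ ^ 4 * (n / (2 * k)) ^ 2) := by gcongr
  have h7 : γ * k ^ 2 * (γ ^ 4 * (n / (2 * k)) ^ 2) = γ ^ 5 / 4 * n ^ 2 := by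
    field_simp
    ring
  linarith

/-- The increment step within equitable partitions: half of the gain of
`exists_witness_labelling` survives when the refinement is made equitable. -/
lemma exists_increment (r : ℕ) (γ : ℝ) (hγ : 0 < γ) (k : ℕ) :
    ∃ S : ℕ, ∀ (V : Type) [Fintype V] [DecidableEq V] (c : Sym2 V → Fin r) (α : Type) [Fintype α]
      (f : V → α), Fintype.card α = k → S ≤ Fintype.card V → Equi f → ¬ Reg c γ f →
      ∃ (β : Type) (_ : Fintype β) (h : V → β), EqRefines f h ∧ Fintype.card β ≤ S ∧ Equi h ∧
        energy c f + γ ^ 5 / 8 * (Fintype.card V : ℝ) ^ 2 ≤ energy c h := by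
  -- `4 ^ (k * k)` is the number of values of the datum `s` in `exists_witness_labelling`
  obtain ⟨ℓ, hℓ⟩ := exists_nat_ge (16 * r * (4 ^ (k * k) : ℝ) / γ ^ 5 + 1)
  have hℓ1 : (1 : ℝ) ≤ ℓ := le_trans (by
    have : 0 ≤ 16 * r * (4 ^ (k * k) : ℝ) / γ ^ 5 := by positivity
    linarith) hℓ
  have hℓ0 : 0 < ℓ := by exact_mod_cast (zero_lt_one.trans_le hℓ1)
  refine ⟨k * ℓ, ?_⟩
  intro V _ _ c α _ f hk hV hf hreg
  have hn : Fintype.card α ≤ Fintype.card V := by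
    rw [hk]; exact (Nat.le_mul_of_pos_right k hℓ0).trans hV
  obtain ⟨s, hs⟩ := exists_witness_labelling c γ hγ f hf hn hreg
  obtain ⟨g, hg, hbad⟩ := exists_equi_split f hf s ℓ hℓ0 (by rw [hk]; exact hV)
  refine ⟨α × Fin ℓ, inferInstance, fun v => (f v, g v), ⟨Prod.fst, ℓ, fun _ => rfl, fun a => ?_⟩,
    by simp [hk], hg, ?_⟩
  · have : (univ.filter fun b : α × Fin ℓ => b.1 = a) = {a} ×ˢ univ := by
      ext ⟨x, j⟩; simp [eq_comm]
    rw [this]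
    simp
  set U := univ.filter fun x => ∃ y, f y = f x ∧ g y = g x ∧ s y ≠ s x with hUdef
  have h1 := hs ((α × Fin ℓ) × (α × α → Bool × Bool)) (fun v => ((f v, g v), s v))
    (fun q => q.1.1) (fun q => q.2) (fun _ => rfl) (fun _ => rfl)
  have h2 := energy_le_add c (fun v => (f v, g v)) (fun v => ((f v, g v), s v)) U (by
    intro x hx
    ext y
    simp only [hUdef, mem_filter, mem_univ, true_and, not_exists, not_and, not_not] at hx
    simp only [mem_cell, Prod.mk.injEq]
    exact ⟨fun h => h.1, fun h => ⟨h, hx y h.1 h.2⟩⟩)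
  have hσ : Fintype.card (α × α → Bool × Bool) = 4 ^ (k * k) := by
    simp [hk]
  rw [hσ] at hbad
  have hbad' : (U.card : ℝ) * ℓ ≤ 4 ^ (k * k) * Fintype.card V := by exact_mod_cast hbad
  set n : ℝ := (Fintype.card V : ℝ)
  have hn0 : 0 ≤ n := by positivity
  have h3 : 16 * r * (4 ^ (k * k) : ℝ) ≤ γ ^ 5 * ℓ := by
    have : 16 * r * (4 ^ (k * k) : ℝ) / γ ^ 5 ≤ ℓ := by linarith
    rw [div_le_iff₀ (by positivity)] at this
    linarith
  have h4 : 2 * r * U.card * n ≤ γ ^ 5 / 8 * n ^ 2 := by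
    have hℓp : (0 : ℝ) < ℓ := by linarith
    refine le_of_mul_le_mul_right ?_ hℓp
    calc 2 * r * U.card * n * ℓ = 2 * r * n * (U.card * ℓ) := by ring
      _ ≤ 2 * r * n * (4 ^ (k * k) * n) := by gcongr
      _ = 16 * r * (4 ^ (k * k) : ℝ) * (n ^ 2 / 8) := by ring
      _ ≤ γ ^ 5 * ℓ * (n ^ 2 / 8) := by gcongr
      _ = _ := by ring
  linarith

/-! ### Iteration -/

/-- Bounds depending on a natural number can be made uniform over an initial segment. -/
lemma exists_uniform_bound {P : ℕ → ℕ → Prop} (hmono : ∀ k S S', S ≤ S' → P k S → P k S')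
    (h : ∀ k, ∃ S, P k S) (K : ℕ) : ∃ S, ∀ k ≤ K, P k S := by
  choose S hS using h
  exact ⟨∑ i ∈ range (K + 1), S i, fun k hk => hmono k (S k) _
    (single_le_sum (f := S) (fun _ _ => Nat.zero_le _) (mem_range.2 (by omega))) (hS k)⟩

/-- Energy increment: if every equitable partition that is not `Good` has a bounded equitable
refinement with energy larger by `δ |V| ^ 2`, then every equitable partition has a bounded
equitable refinement that is `Good`. -/
lemma exists_good_refinement (r : ℕ)
    (Good : ∀ (V : Type) [Fintype V] [DecidableEq V] (_ : Sym2 V → Fin r) (α : Type) [Fintype α],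
      (V → α) → Prop) (δ : ℝ) (hδ : 0 < δ)
    (step : ∀ k : ℕ, ∃ S : ℕ, ∀ (V : Type) [Fintype V] [DecidableEq V] (c : Sym2 V → Fin r)
      (α : Type) [Fintype α] (f : V → α), Fintype.card α = k → S ≤ Fintype.card V → Equi f →
      ¬ Good V c α f →
      ∃ (β : Type) (_ : Fintype β) (h : V → β), EqRefines f h ∧ Fintype.card β ≤ S ∧ Equi h ∧
        energy c f + δ * (Fintype.card V : ℝ) ^ 2 ≤ energy c h) (k : ℕ) :
    ∃ S : ℕ, ∀ (V : Type) [Fintype V] [DecidableEq V] (c : Sym2 V → Fin r)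
      (α : Type) [Fintype α] (f : V → α), Fintype.card α = k → S ≤ Fintype.card V → Equi f →
      ∃ (β : Type) (_ : Fintype β) (h : V → β), EqRefines f h ∧ Fintype.card β ≤ S ∧ Equi h ∧
        Good V c β h := by
  have main : ∀ t k : ℕ, ∃ S : ℕ, ∀ (V : Type) [Fintype V] [DecidableEq V] (c : Sym2 V → Fin r)
      (α : Type) [Fintype α] (f : V → α), Fintype.card α = k → S ≤ Fintype.card V → Equi f →
      (r - t * δ) * (Fintype.card V : ℝ) ^ 2 < energy c f →
      ∃ (β : Type) (_ : Fintype β) (h : V → β), EqRefines f h ∧ Fintype.card β ≤ S ∧ Equi h ∧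
        Good V c β h := by
    intro t
    induction t with
    | zero =>
      intro k
      refine ⟨0, fun V _ _ c α _ f _ _ _ he => ?_⟩
      have := energy_le c f
      simp only [Nat.cast_zero, zero_mul, sub_zero] at he
      linarith
    | succ t ih =>
      intro k
      obtain ⟨S₁, hS₁⟩ := step k
      obtain ⟨S₂, hS₂⟩ := exists_uniform_bound (K := S₁) (fun k S S' hSS hS => by
        intro V _ _ c α _ f hk hV hf he
        obtain ⟨β, hβ, h, h1, h2, h3⟩ := hS V c α f hk (hSS.trans hV) hf he
        exact ⟨β, hβ, h, h1, h2.trans hSS, h3⟩) ih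
      refine ⟨k + S₁ + S₂, fun V _ _ c α _ f hk hV hf he => ?_⟩
      by_cases hgood : Good V c α f
      · exact ⟨α, inferInstance, f, EqRefines.refl f, by omega, hf, hgood⟩
      obtain ⟨β, hβ, h, h1, h2, h3, h4⟩ := hS₁ V c α f hk (by omega) hf hgood
      obtain ⟨β', hβ', h', h1', h2', h3'⟩ := hS₂ _ h2 V c β h rfl (by omega) h3 (by
        push_cast at he
        nlinarith [he, h4])
      exact ⟨β', hβ', h', h1.trans h1', by omega, h3'⟩
  obtain ⟨t, ht⟩ := exists_nat_gt ((r : ℝ) / δ)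
  obtain ⟨S, hS⟩ := main t k
  refine ⟨S + 1, fun V _ _ c α _ f hk hV hf => ?_⟩
  obtain ⟨β, hβ, h, h1, h2, h3⟩ := hS V c α f hk (by omega) hf (by
    refine lt_of_lt_of_le ?_ (energy_nonneg c f)
    rw [div_lt_iff₀ hδ] at ht
    refine mul_neg_of_neg_of_pos (by linarith) ?_
    have : 0 < Fintype.card V := by omega
    positivity)
  exact ⟨β, hβ, h, h1, by omega, h3⟩

/-! ### From energies to densities, and the final assembly -/

lemma MRegular.mono {V : Type} [DecidableEq V] {r : ℕ} {c : Sym2 V → Fin r} {γ γ' : ℝ}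
    (hγ : γ ≤ γ') {A B : Finset V} (h : MRegular c γ A B) : MRegular c γ' A B := by
  intro A' hA B' hB h1 h2 ρ
  refine (h A' hA B' hB (le_trans ?_ h1) (le_trans ?_ h2) ρ).trans hγ <;> gcongr

/-- Chebyshev: if refining `f` to `h` gains little energy, then few pairs of cells of `h` have a
density far from that of the surrounding pair of cells of `f`. -/
lemma card_far_le {V α β : Type} [Fintype V] [DecidableEq V] [Fintype α] [Fintype β] {r : ℕ}
    (c : Sym2 V → Fin r) (f : V → α) (h : V → β) (π : β → α) (hπ : ∀ v, π (h v) = f v)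
    (hh : Equi h) (hn : Fintype.card β ≤ Fintype.card V) (hV : 0 < Fintype.card V)
    (e η : ℝ) (he : 0 < e)
    (hen : energy c h ≤ energy c f + η * (Fintype.card V : ℝ) ^ 2) :
    ((univ.filter fun q : β × β =>
        ¬ ∀ ρ, |cdens c ρ f (π q.1, π q.2) - cdens c ρ h q| < e).card : ℝ) * e ^ 2 ≤
      4 * η * (Fintype.card β : ℝ) ^ 2 := by
  set X := univ.filter fun q : β × β =>
    ¬ ∀ ρ, |cdens c ρ f (π q.1, π q.2) - cdens c ρ h q| < e with hX
  have hβ : Nonempty β := by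
    obtain ⟨v⟩ := Fintype.card_pos_iff.1 hV
    exact ⟨h v⟩
  have hK : (0 : ℝ) < Fintype.card β := by exact_mod_cast Fintype.card_pos
  have hn0 : (0 : ℝ) < Fintype.card V := by exact_mod_cast hV
  set n : ℝ := (Fintype.card V : ℝ)
  set K : ℝ := (Fintype.card β : ℝ)
  have hsub := energy_sub c f h π hπ
  have hcell : ∀ q ∈ X, e ^ 2 * (n / (2 * K)) ^ 2 ≤ ∑ ω with Prod.map h h ω = q, ∑ ρ,
      (cdens c ρ h (Prod.map h h ω) - cdens c ρ f (Prod.map f f ω)) ^ 2 := by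
    intro q hq
    have := (mem_filter.1 hq).2
    push Not at this
    obtain ⟨ρ, hρ⟩ := this
    have h1 : ∀ ω ∈ univ.filter (fun ω => Prod.map h h ω = q), e ^ 2 ≤ ∑ ρ,
        (cdens c ρ h (Prod.map h h ω) - cdens c ρ f (Prod.map f f ω)) ^ 2 := by
      intro ω hω
      obtain rfl := (mem_filter.1 hω).2
      refine le_trans ?_ (single_le_sum (fun ρ _ => sq_nonneg _) (mem_univ ρ))
      have h2 : Prod.map f f ω = (π (Prod.map h h ω).1, π (Prod.map h h ω).2) := by
        simp [Prod.map, hπ]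
      rw [h2, ← sq_abs (_ - _), abs_sub_comm]
      exact pow_le_pow_left₀ he.le hρ 2
    refine le_trans ?_ (card_nsmul_le_sum _ _ _ h1)
    rw [nsmul_eq_mul, filter_map_eq, card_product, Nat.cast_mul, mul_comm, pow_two (n / _)]
    gcongr
    · exact hh.half_le hn _
    · exact hh.half_le hn _
  have hsum : (X.card : ℝ) * (e ^ 2 * (n / (2 * K)) ^ 2) ≤ η * n ^ 2 := by
    refine le_trans ?_ (sub_le_iff_le_add'.2 hen)
    rw [hsub, sum_comm, ← sum_fiberwise univ (Prod.map h h), ← nsmul_eq_mul, ← sum_const]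
    refine (sum_le_sum hcell).trans ?_
    exact sum_le_sum_of_subset_of_nonneg (subset_univ _) fun t _ _ =>
      sum_nonneg fun ω _ => sum_nonneg fun ρ _ => sq_nonneg _
  have h3 : (X.card : ℝ) * (e ^ 2 * (n / (2 * K)) ^ 2) =
      (X.card * e ^ 2) * (n ^ 2 / (4 * K ^ 2)) := by
    field_simp
    ring
  have h4 : η * n ^ 2 = 4 * η * K ^ 2 * (n ^ 2 / (4 * K ^ 2)) := by
    field_simp
  rw [h3, h4] at hsum
  exact le_of_mul_le_mul_right hsum (by positivity)

/-- Indexing the cells of an equitable partition `f` with a good equitable refinement `h` by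
`Fin k` and `Fin k × Fin ℓ`. -/
lemma assemble (r : ℕ) (E : ℕ → ℝ) (hE : ∀ x : ℕ, 0 < E x ∧ E x < 1) (V : Type) [Fintype V]
    [DecidableEq V] (c : Sym2 V → Fin r) (hV : 0 < Fintype.card V) (α β : Type) [Fintype α]
    [Fintype β] (f : V → α) (h : V → β) (hk : 2 ≤ Fintype.card α)
    (hn : Fintype.card β ≤ Fintype.card V) (hf : Equi f) (hh : Equi h) (href : EqRefines f h)
    (hfr : Reg c (E 0 / 4) f)
    (hhr : Reg c (E (Fintype.card α) / ((Fintype.card α : ℝ) + 1) ^ 2) h)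
    (hen : energy c h ≤ energy c f + E 0 ^ 4 / 16 * (Fintype.card V : ℝ) ^ 2) :
    ∃ (k ℓ : ℕ) (A : Fin k → Finset V) (B : Fin k → Fin ℓ → Finset V),
        k = Fintype.card α ∧ k * ℓ = Fintype.card β ∧
        IsEquipartition (univ : Finset V) A ∧
        IsEquipartition (univ : Finset V) (fun q : Fin k × Fin ℓ => B q.1 q.2) ∧
        (∀ i : Fin k, Finset.univ.biUnion (B i) = A i) ∧
        ((((univ : Finset (Fin k × Fin k)).filter fun q =>
            q.1 < q.2 ∧ ¬ MRegular c (E 0) (A q.1) (A q.2)).card : ℝ)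
          ≤ E 0 * ((k : ℝ) * ((k : ℝ) - 1) / 2)) ∧
        (∀ i i' : Fin k, i < i' →
          (((univ : Finset (Fin ℓ × Fin ℓ)).filter fun jq =>
              ¬ MRegular c (E k) (B i jq.1) (B i' jq.2)).card : ℝ) ≤
            E k * (ℓ : ℝ) ^ 2) ∧
        ((((univ : Finset (Fin k × Fin k)).filter fun q =>
            q.1 < q.2 ∧
              ¬ ((((univ : Finset (Fin ℓ × Fin ℓ)).filter fun jq =>
                ¬ ∀ ρ : Fin r, |mdensity c ρ (A q.1) (A q.2) -
                    mdensity c ρ (B q.1 jq.1) (B q.2 jq.2)| < E 0).card : ℝ) ≤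
                  E 0 * (ℓ : ℝ) ^ 2)).card : ℝ)
          ≤ E 0 * ((k : ℝ) * ((k : ℝ) - 1) / 2)) := by
  obtain ⟨π, ℓ, hπ, hℓ⟩ := href
  have hβ := card_eq_mul_of_fibers hℓ
  obtain ⟨k, hkdef⟩ : ∃ k, k = Fintype.card α := ⟨_, rfl⟩
  rw [← hkdef] at hβ hk hhr
  have hℓ0 : 0 < ℓ := by
    obtain ⟨v⟩ := Fintype.card_pos_iff.1 hV
    have : 0 < Fintype.card β := Fintype.card_pos_iff.2 ⟨h v⟩
    rw [hβ] at this
    exact Nat.pos_of_mul_pos_left this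
  let ι : Fin k ≃ α := (Fintype.equivFinOfCardEq hkdef.symm).symm
  have hfib : ∀ a, Fintype.card {b // π b = a} = ℓ := fun a => by
    rw [← hℓ a, Fintype.card_subtype]
  let κ : Fin k → Fin ℓ → β := fun i j => ((Fintype.equivFinOfCardEq (hfib (ι i))).symm j).1
  have hκπ : ∀ i j, π (κ i j) = ι i := fun i j =>
    ((Fintype.equivFinOfCardEq (hfib (ι i))).symm j).2
  have hκinj : ∀ i i' j j', κ i j = κ i' j' → i = i' ∧ j = j' := by
    intro i i' j j' hij
    have hi : i = i' := ι.injective (by rw [← hκπ i j, ← hκπ i' j', hij])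
    subst hi
    exact ⟨rfl, (Fintype.equivFinOfCardEq (hfib (ι i))).symm.injective (Subtype.ext hij)⟩
  have hκsurj : ∀ i b, π b = ι i → ∃ j, κ i j = b := by
    intro i b hb
    refine ⟨Fintype.equivFinOfCardEq (hfib (ι i)) ⟨b, hb⟩, ?_⟩
    simp [κ]
  -- the `γ k ^ 2` in `Reg` counts ordered pairs with the diagonal; `k ≥ 2` is used here
  have hkk : E 0 / 4 * (k : ℝ) ^ 2 ≤ E 0 * ((k : ℝ) * ((k : ℝ) - 1) / 2) := by
    have h2 : (2 : ℝ) ≤ k := by exact_mod_cast hk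
    have h3 := (hE 0).1
    nlinarith [mul_nonneg h3.le (mul_nonneg (by linarith : (0 : ℝ) ≤ k) (sub_nonneg.2 h2))]
  refine ⟨k, ℓ, fun i => cell f (ι i), fun i j => cell h (κ i j), hkdef, hβ.symm,
    ⟨?_, ?_, ?_⟩, ⟨?_, ?_, ?_⟩, ?_, ?_, ?_, ?_⟩
  · intro i j hij
    refine disjoint_left.2 fun v hv hv' => hij (ι.injective ?_)
    rw [← mem_cell.1 hv, ← mem_cell.1 hv']
  · ext v
    simp only [mem_biUnion, mem_univ, true_and, mem_cell, iff_true]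
    exact ⟨ι.symm (f v), by simp⟩
  · intro i j
    exact (hf _).2.trans (Nat.add_le_add_right (hf _).1 1)
  · intro p q hpq
    refine disjoint_left.2 fun v hv hv' => hpq ?_
    have := hκinj p.1 q.1 p.2 q.2 (by rw [← mem_cell.1 hv, ← mem_cell.1 hv'])
    exact Prod.ext this.1 this.2
  · ext v
    simp only [mem_biUnion, mem_univ, true_and, mem_cell, iff_true]
    obtain ⟨j, hj⟩ := hκsurj (ι.symm (f v)) (h v) (by simp [hπ])
    exact ⟨(_, j), hj.symm⟩
  · intro p q
    exact (hh _).2.trans (Nat.add_le_add_right (hh _).1 1)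
  · intro i
    ext v
    simp only [mem_biUnion, mem_univ, true_and, mem_cell]
    constructor
    · rintro ⟨j, hj⟩
      rw [← hπ, hj, hκπ]
    · intro hv
      obtain ⟨j, hj⟩ := hκsurj i (h v) (by rw [hπ, hv])
      exact ⟨j, hj.symm⟩
  · refine le_trans ?_ (le_trans hfr (by rw [← hkdef]; exact hkk))
    refine Nat.cast_le.2 (card_le_card_of_injOn (fun q => (ι q.1, ι q.2)) ?_ ?_)
    · intro q hq
      simp only [coe_filter, mem_univ, true_and, Set.mem_ofPred_eq, irr] at hq ⊢
      exact fun hr => hq.2 (hr.mono (by linarith [(hE 0).1]))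
    · rintro ⟨a, b⟩ _ ⟨a', b'⟩ _ hq
      simpa using hq
  · intro i i' _
    have h1 : ((irr c (E k / ((k : ℝ) + 1) ^ 2) h).card : ℝ) ≤ E k * (ℓ : ℝ) ^ 2 := by
      refine le_trans hhr ?_
      rw [hβ, Nat.cast_mul, div_mul_eq_mul_div, div_le_iff₀ (by positivity)]
      have h3 := (hE k).1.le
      calc E k * ((k : ℝ) * ℓ) ^ 2 = E k * ℓ ^ 2 * (k : ℝ) ^ 2 := by ring
        _ ≤ _ := by gcongr; linarith
    refine le_trans ?_ h1
    refine Nat.cast_le.2 (card_le_card_of_injOn (fun q => (κ i q.1, κ i' q.2)) ?_ ?_)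
    · intro q hq
      simp only [coe_filter, mem_univ, true_and, Set.mem_ofPred_eq, irr] at hq ⊢
      refine fun hr => hq (hr.mono (div_le_self (hE k).1.le ?_))
      have : (0 : ℝ) ≤ k := by positivity
      nlinarith
    · rintro ⟨a, b⟩ _ ⟨a', b'⟩ _ hq
      simp only [Prod.mk.injEq] at hq ⊢
      exact ⟨(hκinj _ _ _ _ hq.1).2, (hκinj _ _ _ _ hq.2).2⟩
  · have hfar := card_far_le c f h π hπ hh hn hV (E 0) (E 0 ^ 4 / 16) (hE 0).1 hen
    set X := univ.filter fun q : β × β =>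
      ¬ ∀ ρ, |cdens c ρ f (π q.1, π q.2) - cdens c ρ h q| < E 0 with hX
    let bad : Fin k × Fin k → Finset (Fin ℓ × Fin ℓ) := fun q => univ.filter fun jq =>
      ¬ ∀ ρ : Fin r, |mdensity c ρ (cell f (ι q.1)) (cell f (ι q.2)) -
        mdensity c ρ (cell h (κ q.1 jq.1)) (cell h (κ q.2 jq.2))| < E 0
    set Y := univ.filter fun q : Fin k × Fin k =>
      q.1 < q.2 ∧ ¬ (((bad q).card : ℝ) ≤ E 0 * (ℓ : ℝ) ^ 2) with hY
    have h1 : (Y.card : ℝ) * (E 0 * (ℓ : ℝ) ^ 2) ≤ X.card := by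
      calc (Y.card : ℝ) * (E 0 * (ℓ : ℝ) ^ 2) = ∑ q ∈ Y, E 0 * (ℓ : ℝ) ^ 2 := by
            rw [sum_const, nsmul_eq_mul]
        _ ≤ ∑ q ∈ Y, ((bad q).card : ℝ) :=
            sum_le_sum fun q hq => (not_le.1 (mem_filter.1 hq).2.2).le
        _ = ((Y.sigma bad).card : ℝ) := by rw [card_sigma, Nat.cast_sum]
        _ ≤ X.card := by
            refine Nat.cast_le.2 (card_le_card_of_injOn
              (fun p => (κ p.1.1 p.2.1, κ p.1.2 p.2.2)) ?_ ?_)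
            · intro p hp
              have hp2 := (mem_filter.1 (mem_sigma.1 (mem_coe.1 hp)).2).2
              refine mem_coe.2 (mem_filter.2 ⟨mem_univ _, ?_⟩)
              simpa only [hκπ, cdens] using hp2
            · rintro ⟨⟨i, i'⟩, j, j'⟩ _ ⟨⟨l, l'⟩, t, t'⟩ _ hq
              simp only [Prod.mk.injEq] at hq
              obtain ⟨rfl, rfl⟩ := hκinj _ _ _ _ hq.1
              obtain ⟨rfl, rfl⟩ := hκinj _ _ _ _ hq.2
              rfl
    have hE0 := (hE 0).1
    have hℓ' : (0 : ℝ) < ℓ := by exact_mod_cast hℓ0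
    have h2 : (Y.card : ℝ) ≤ E 0 / 4 * (k : ℝ) ^ 2 := by
      rw [hβ, Nat.cast_mul] at hfar
      refine le_of_mul_le_mul_right ?_ (by positivity : 0 < E 0 ^ 3 * (ℓ : ℝ) ^ 2)
      calc (Y.card : ℝ) * (E 0 ^ 3 * (ℓ : ℝ) ^ 2)
          = (Y.card : ℝ) * (E 0 * (ℓ : ℝ) ^ 2) * E 0 ^ 2 := by ring
        _ ≤ X.card * E 0 ^ 2 := by gcongr
        _ ≤ _ := hfar
        _ = _ := by ring
    exact h2.trans hkk

/-- the main lemma for `r`-graphs: an equipartition `A` and an equitable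
refinement `B` such that most pairs of `A` are `E 0`-regular, most refined pairs are
`E k`-regular, and most refined densities are close to the original densities. -/
theorem main_lemma_multicolor (r : ℕ) (hr : 2 ≤ r) (m : ℕ) (hm : 0 < m)
    (E : ℕ → ℝ) (hE : ∀ x : ℕ, 0 < E x ∧ E x < 1) :
    ∃ S : ℕ, ∀ (V : Type) [Fintype V] [DecidableEq V] (c : Sym2 V → Fin r),
      S ≤ Fintype.card V →
      ∃ (k ℓ : ℕ) (A : Fin k → Finset V) (B : Fin k → Fin ℓ → Finset V),
        m ≤ k ∧ k * ℓ ≤ S ∧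
        IsEquipartition (univ : Finset V) A ∧
        IsEquipartition (univ : Finset V) (fun q : Fin k × Fin ℓ => B q.1 q.2) ∧
        (∀ i : Fin k, Finset.univ.biUnion (B i) = A i) ∧
        ((((univ : Finset (Fin k × Fin k)).filter fun q =>
            q.1 < q.2 ∧ ¬ MRegular c (E 0) (A q.1) (A q.2)).card : ℝ)
          ≤ E 0 * ((k : ℝ) * ((k : ℝ) - 1) / 2)) ∧
        (∀ i i' : Fin k, i < i' →
          (((univ : Finset (Fin ℓ × Fin ℓ)).filter fun jq =>
              ¬ MRegular c (E k) (B i jq.1) (B i' jq.2)).card : ℝ) ≤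
            E k * (ℓ : ℝ) ^ 2) ∧
        ((((univ : Finset (Fin k × Fin k)).filter fun q =>
            q.1 < q.2 ∧
              ¬ ((((univ : Finset (Fin ℓ × Fin ℓ)).filter fun jq =>
                ¬ ∀ ρ : Fin r, |mdensity c ρ (A q.1) (A q.2) -
                    mdensity c ρ (B q.1 jq.1) (B q.2 jq.2)| < E 0).card : ℝ) ≤
                  E 0 * (ℓ : ℝ) ^ 2)).card : ℝ)
          ≤ E 0 * ((k : ℝ) * ((k : ℝ) - 1) / 2)) := by
  have hE0 := (hE 0).1
  -- for every `k`, regularising partitions into `k` cells to within `E k / (k + 1) ^ 2`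
  have hinner : ∀ k : ℕ, ∃ S : ℕ, ∀ (V : Type) [Fintype V] [DecidableEq V] (c : Sym2 V → Fin r)
      (α : Type) [Fintype α] (f : V → α), Fintype.card α = k → S ≤ Fintype.card V → Equi f →
      ∃ (β : Type) (_ : Fintype β) (h : V → β), EqRefines f h ∧ Fintype.card β ≤ S ∧ Equi h ∧
        Reg c (E k / ((k : ℝ) + 1) ^ 2) h := by
    intro k
    have hγ : 0 < E k / ((k : ℝ) + 1) ^ 2 := by have := (hE k).1; positivity
    exact exists_good_refinement r
      (fun V _ _ c α _ f => Reg c (E k / ((k : ℝ) + 1) ^ 2) f) _ (by positivity)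
      (exists_increment r _ hγ) k
  choose T hT using hinner
  have hγ0 : 0 < E 0 / 4 := by positivity
  obtain ⟨S₁, hS₁⟩ := exists_good_refinement r
    (fun V _ _ c α _ f => Reg c (E 0 / 4) f ∧ ∃ (β : Type) (_ : Fintype β) (h : V → β),
      EqRefines f h ∧ Fintype.card β ≤ T (Fintype.card α) ∧ Equi h ∧
      Reg c (E (Fintype.card α) / ((Fintype.card α : ℝ) + 1) ^ 2) h ∧
      energy c h ≤ energy c f + E 0 ^ 4 / 16 * (Fintype.card V : ℝ) ^ 2)
    (min ((E 0 / 4) ^ 5 / 8) (E 0 ^ 4 / 16)) (lt_min (by positivity) (by positivity)) (by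
      intro k
      obtain ⟨S, hS⟩ := exists_increment r _ hγ0 k
      refine ⟨S + T k, fun V _ _ c α _ f hk hV hf hgood => ?_⟩
      by_cases hreg : Reg c (E 0 / 4) f
      · obtain ⟨β, hβ, h, h1, h2, h3, h4⟩ := hT k V c α f hk (by omega) hf
        refine ⟨β, hβ, h, h1, by omega, h3, ?_⟩
        by_contra hlt
        refine hgood ⟨hreg, β, hβ, h, h1, by rw [hk]; exact h2, h3, by rw [hk]; exact h4, ?_⟩
        refine (not_le.1 hlt).le.trans ?_
        gcongr
        exact min_le_right _ _
      · obtain ⟨β, hβ, h, h1, h2, h3, h4⟩ := hS V c α f hk (by omega) hf hreg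
        refine ⟨β, hβ, h, h1, by omega, h3, le_trans ?_ h4⟩
        gcongr
        exact min_le_left _ _) (m + 1)
  refine ⟨S₁ + (m + 1) + ∑ i ∈ range (S₁ + 1), T i, fun V _ _ c hV => ?_⟩
  -- an equitable labelling with `m + 1` labels, obtained by splitting the one-cell partition
  obtain ⟨g, hg, -⟩ := exists_equi_split (fun _ : V => ()) (fun _ => by simp [cell]) (fun _ => ())
    (m + 1) (Nat.succ_pos m) (by simp only [Fintype.card_unit]; omega)
  obtain ⟨α, hα, f, hgf, hαc, hf, hfr, β, hβ, h, hfh, hβc, hh, hhr, hen⟩ :=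
    hS₁ V c _ _ (by simp) (by omega) hg
  have hVpos : 0 < Fintype.card V := by omega
  have hle : T (Fintype.card α) ≤ ∑ i ∈ range (S₁ + 1), T i :=
    single_le_sum (f := T) (fun _ _ => Nat.zero_le _) (mem_range.2 (by omega))
  have hm1 : m + 1 ≤ Fintype.card α := by
    obtain ⟨π, ℓ, -, hℓ⟩ := hgf
    have h1 := card_eq_mul_of_fibers hℓ
    obtain ⟨v⟩ := Fintype.card_pos_iff.1 hVpos
    have h2 : 0 < Fintype.card α := Fintype.card_pos_iff.2 ⟨f v⟩
    have h3 : 0 < ℓ := by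
      rw [h1] at h2
      exact Nat.pos_of_mul_pos_left h2
    rw [h1]
    simpa using Nat.le_mul_of_pos_right (m + 1) h3
  obtain ⟨k, ℓ, A, B, hk, hkℓ, hrest⟩ := assemble r E hE V c hVpos α β f h (by omega) (by omega)
    hf hh hfh hfr hhr hen
  exact ⟨k, ℓ, A, B, by omega, by omega, hrest⟩
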